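/- Soundness of amgu for Clique-Sharing, general case: let x be a variable, T a finite set of variables, cl a clique set and sh a sharing set, and let U = ⋃(cl_{{x}} ∪ cl_T ∪ sh_{{x}} ∪ sh_T) be the union of all cliques and sharing groups relevant to x or T. Then amgu(x, T, ↓cl ∪ sh) ⊆ ↓(rel̄({x} ∪ T, cl) ∪ {U}) ∪ (sh \ sh_{{x}∪T}). -/

import Mathlib

variable {V : Type*} [DecidableEq V]

/-- `℘⁰(C)`: the set of nonempty subsets of a finite set `C`. -/
def pow0 (C : Finset V) : Set (Finset V) := {u | u ⊆ C ∧ u ≠ ∅}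

/-- Concretization of a clique set: `↓cl = ⋃_{C ∈ cl} ℘⁰(C)`. -/
def conc (cl : Set (Finset V)) : Set (Finset V) := ⋃ C ∈ cl, pow0 C

/-- Binary union: `s₁ ⊎ s₂ = {a ∪ b : a ∈ s₁, b ∈ s₂}`. -/
def bin (s₁ s₂ : Set (Finset V)) : Set (Finset V) :=
  {u | ∃ a ∈ s₁, ∃ b ∈ s₂, u = a ∪ b}

/-- Star union: all unions `⋃ T` over finite nonempty subfamilies `T ⊆ s`. -/
def starU (s : Set (Finset V)) : Set (Finset V) :=
  {u | ∃ T : Finset (Finset V), T.Nonempty ∧ ↑T ⊆ s ∧ u = T.sup id}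

/-- `s_G`: the part of `s` relevant to `G` (groups intersecting `G`). -/
def relG (G : Finset V) (s : Set (Finset V)) : Set (Finset V) :=
  {u ∈ s | u ∩ G ≠ ∅}

/-- `rel̄(S, cl) = {C \ S : C ∈ cl} \ {∅}`. -/
def relbar (S : Finset V) (cl : Set (Finset V)) : Set (Finset V) :=
  {d | (∃ C ∈ cl, d = C \ S) ∧ d ≠ ∅}

/-- `project(G, s) = {u ∩ G : u ∈ s} \ {∅}`. -/
def sproject (G : Finset V) (s : Set (Finset V)) : Set (Finset V) :=
  {d | (∃ u ∈ s, d = u ∩ G) ∧ d ≠ ∅}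

/-- Abstract unification of the Sharing domain for `x = t`, `T` the variables of `t`. -/
def amgu (x : V) (T : Finset V) (s : Set (Finset V)) : Set (Finset V) :=
  (s \ relG ({x} ∪ T) s) ∪ bin (starU (relG {x} s)) (starU (relG T s))

/-- The `extend` function of the Sharing domain. -/
def extendSh (Call : Set (Finset V)) (G : Finset V) (Prime : Set (Finset V)) :
    Set (Finset V) :=
  {u ∈ Call | u ∩ G = ∅} ∪ {u ∈ starU (relG G Call) | u ∩ G ∈ Prime}

/-- Union of all groups of `s` containing `x`, as a set of variables. -/
def occSet (s : Set (Finset V)) (x : V) : Set V :=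
  ⋃ u ∈ {u ∈ s | x ∈ u}, (↑u : Set V)

/-- Groups relevant to `G` are contained in `U`, and hence their star unions too. -/
theorem star_aux (G : Finset V) (cl sh : Set (Finset V)) (U : Finset V)
    (h1 : ∀ u ∈ relG G cl, u ⊆ U) (h2 : ∀ u ∈ relG G sh, u ⊆ U)
    (a : Finset V) (ha : a ∈ starU (relG G (conc cl ∪ sh))) : a ⊆ U ∧ a ≠ ∅ := by
  obtain ⟨F, ⟨w, hw⟩, hF, rfl⟩ := ha
  constructor
  · apply Finset.sup_le
    intro u hu
    obtain ⟨hu1 | hu1, hu2⟩ := hF hu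
    · simp only [conc, Set.mem_iUnion] at hu1
      obtain ⟨C, hC, huC, -⟩ := hu1
      refine Finset.Subset.trans huC (h1 C ⟨hC, fun h => hu2 ?_⟩)
      exact Finset.subset_empty.1 (h ▸ Finset.inter_subset_inter_right huC)
    · exact h2 u ⟨hu1, hu2⟩
  · intro h
    have hw0 : w ⊆ ∅ := h ▸ (Finset.le_sup (f := id) hw : id w ≤ F.sup id)
    apply (hF hw).2
    rw [Finset.subset_empty.1 hw0, Finset.empty_inter]

/-- amgu soundness, general case. -/
theorem amgu_clique_general (x : V) (T : Finset V) (cl sh : Set (Finset V))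
    (U : Finset V)
    (hU : (↑U : Set V) =
      ⋃ u ∈ (relG {x} cl ∪ relG T cl ∪ relG {x} sh ∪ relG T sh), (↑u : Set V)) :
    amgu x T (conc cl ∪ sh) ⊆
      conc (relbar ({x} ∪ T) cl ∪ {U}) ∪ (sh \ relG ({x} ∪ T) sh) := by
  have key : ∀ u ∈ (relG {x} cl ∪ relG T cl ∪ relG {x} sh ∪ relG T sh), u ⊆ U := by
    intro u hu
    rw [← Finset.coe_subset, hU]
    exact Set.subset_biUnion_of_mem (u := fun u : Finset V => (↑u : Set V)) hu
  rintro u (⟨hu | hu, hn⟩ | ⟨a, ha, b, hb, rfl⟩)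
  · left
    have hd : u ∩ ({x} ∪ T) = ∅ := by
      by_contra h
      exact hn ⟨Or.inl hu, h⟩
    simp only [conc, Set.mem_iUnion] at hu ⊢
    obtain ⟨C, hC, huC, hne⟩ := hu
    have hs : u ⊆ C \ ({x} ∪ T) :=
      Finset.subset_sdiff.2 ⟨huC, Finset.disjoint_iff_inter_eq_empty.2 hd⟩
    refine ⟨C \ ({x} ∪ T), Or.inl ⟨⟨C, hC, rfl⟩, fun h => hne ?_⟩, hs, hne⟩
    exact Finset.subset_empty.1 (h ▸ hs)
  · right
    exact ⟨hu, fun h => hn ⟨Or.inr hu, h.2⟩⟩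
  · left
    have h1 := star_aux {x} cl sh U (fun u hu => key u (Or.inl (Or.inl (Or.inl hu))))
      (fun u hu => key u (Or.inl (Or.inr hu))) a ha
    have h2 := star_aux T cl sh U (fun u hu => key u (Or.inl (Or.inl (Or.inr hu))))
      (fun u hu => key u (Or.inr hu)) b hb
    simp only [conc, Set.mem_iUnion]
    refine ⟨U, Or.inr rfl, Finset.union_subset h1.1 h2.1, fun h => h1.2 ?_⟩
    exact Finset.subset_empty.1 (h ▸ Finset.subset_union_left)
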